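/- arXiv:1312.7860 — 5 statements merged into one kernel-verified Lean document; each statement's English description precedes it below -/
import Mathlib

section
/- Let Φ : ℝ → ℝ be the standard normal CDF. If 0 ≤ k ≤ √(2π), then for every b ∈ ℝ the equation Φ(k·θ + b) = θ has exactly one real solution θ, and this solution lies in the open interval (0,1). -/
/-- The standard normal cumulative distribution function
`Φ(x) = ∫_{-∞}^{x} (2π)^{-1/2} exp(-t²/2) dt`. -/
noncomputable def stdNormalCDF (x : ℝ) : ℝ :=
  ∫ t in Set.Iic x, (Real.sqrt (2 * Real.pi))⁻¹ * Real.exp (-t ^ 2 / 2)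

/-!
The map `θ ↦ Φ(kθ + b)` sends `[0, 1]` continuously into `(0, 1)`, so it has a fixed point there.
The density of `Φ` is at most `1 / √(2π)`, strictly so away from the origin; hence `Φ` grows
strictly slower than `x / √(2π)` on every nondegenerate interval, and `θ - Φ(kθ + b)` is strictly
increasing as soon as `k ≤ √(2π)`. For `k ≤ 0` this only needs `Φ` to be monotone.
-/

open Function MeasureTheory ProbabilityTheory Set
open scoped NNReal

section FixedPoints

lemma exists_mem_Ioo_isFixedPt_of_mapsTo {α : Type*} [ConditionallyCompleteLinearOrder α]
    [TopologicalSpace α] [OrderTopology α] [DenselyOrdered α] {a b : α} {f : α → α}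
    (hf : ContinuousOn f (Icc a b)) (hab : a ≤ b) (hmaps : MapsTo f (Icc a b) (Ioo a b)) :
    ∃ x ∈ Ioo a b, IsFixedPt f x := by
  obtain ⟨x, hx, hfx⟩ :=
    exists_mem_Icc_isFixedPt_of_mapsTo hf hab (hmaps.mono_right Ioo_subset_Icc_self)
  exact ⟨x, hfx ▸ hmaps hx, hfx⟩

lemma subsingleton_fixedPoints_of_injective_sub {G : Type*} [AddGroup G] {f : G → G}
    (hf : Injective fun x ↦ x - f x) : (fixedPoints f).Subsingleton :=
  fun _ hx _ hy ↦ hf <| (sub_eq_zero.2 hx.symm).trans (sub_eq_zero.2 hy.symm).symm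

lemma strictMono_sub_comp_affine {R : Type*} [CommRing R] [LinearOrder R] [IsStrictOrderedRing R]
    {F : R → R} {c k : R} (hF : Monotone F) (hcF : StrictMono fun x ↦ c * x - F x)
    (hck : c * k ≤ 1) (b : R) : StrictMono fun θ ↦ θ - F (k * θ + b) := by
  intro x y hxy
  rcases le_or_gt k 0 with hk | hk
  · have hF_anti : F (k * y + b) ≤ F (k * x + b) :=
      hF (add_le_add_left (mul_le_mul_of_nonpos_left hxy.le hk) b)
    linear_combination hxy + hF_anti
  · have hF_slow : c * (k * x + b) - F (k * x + b) < c * (k * y + b) - F (k * y + b) :=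
      hcF (add_lt_add_left (mul_lt_mul_of_pos_left hxy hk) b)
    have hslack : (1 - c * k) * x ≤ (1 - c * k) * y :=
      mul_le_mul_of_nonneg_left hxy.le (sub_nonneg.2 hck)
    linear_combination hF_slow + hslack

end FixedPoints

section CDF

variable (μ : Measure ℝ) [IsProbabilityMeasure μ]

lemma cdf_sub_cdf_eq_real_Ioc {x y : ℝ} (hxy : x ≤ y) :
    cdf μ y - cdf μ x = μ.real (Ioc x y) := by
  rw [sub_eq_iff_eq_add', cdf_eq_real, cdf_eq_real, ← Iic_union_Ioc_eq_Iic hxy,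
    measureReal_union (Iic_disjoint_Ioc le_rfl) measurableSet_Ioc]

lemma strictMono_cdf [μ.IsOpenPosMeasure] : StrictMono (cdf μ) := by
  intro x y hxy
  rw [← sub_pos, cdf_sub_cdf_eq_real_Ioc μ hxy.le]
  have hpos : 0 < μ (Ioc x y) :=
    ((Measure.measure_Ioo_pos μ).2 hxy).trans_le (measure_mono Ioo_subset_Ioc_self)
  exact ENNReal.toReal_pos hpos.ne' (measure_ne_top μ _)

lemma cdf_mem_Ioo [μ.IsOpenPosMeasure] (x : ℝ) : cdf μ x ∈ Ioo (0 : ℝ) 1 :=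
  ⟨(cdf_nonneg μ (x - 1)).trans_lt (strictMono_cdf μ (sub_one_lt x)),
    (strictMono_cdf μ (lt_add_one x)).trans_le (cdf_le_one μ (x + 1))⟩

lemma continuous_cdf [NullSingletonClass μ] : Continuous (cdf μ) := by
  refine continuous_iff_continuousAt.2 fun x ↦ ?_
  rw [(monotone_cdf μ).continuousAt_iff_leftLim_eq_rightLim, (cdf μ).rightLim_eq]
  have hjump : ENNReal.ofReal (cdf μ x - leftLim (cdf μ) x) = 0 := by
    rw [← StieltjesFunction.measure_singleton, measure_cdf, measure_singleton]
  exact ((monotone_cdf μ).leftLim_le le_rfl).antisymm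
    (sub_nonpos.1 (ENNReal.ofReal_eq_zero.1 hjump))

end CDF

section Gaussian

variable (μ : ℝ) {v : ℝ≥0}

lemma continuous_gaussianPDFReal (v : ℝ≥0) : Continuous (gaussianPDFReal μ v) := by
  rw [gaussianPDFReal_def]
  fun_prop

lemma gaussianPDFReal_le (v : ℝ≥0) (x : ℝ) :
    gaussianPDFReal μ v x ≤ (√(2 * Real.pi * v))⁻¹ :=
  mul_le_of_le_one_right (by positivity) <| Real.exp_le_one_iff.2 <|
    div_nonpos_of_nonpos_of_nonneg (neg_nonpos.2 (sq_nonneg _)) (by positivity)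

lemma gaussianPDFReal_lt_of_ne (hv : v ≠ 0) {x : ℝ} (hx : x ≠ μ) :
    gaussianPDFReal μ v x < (√(2 * Real.pi * v))⁻¹ :=
  mul_lt_of_lt_one_right (by positivity) <| Real.exp_lt_one_iff.2 <|
    div_neg_of_neg_of_pos (neg_neg_of_pos (sq_pos_of_ne_zero (sub_ne_zero.2 hx))) (by positivity)

lemma isOpenPosMeasure_gaussianReal (hv : v ≠ 0) : (gaussianReal μ v).IsOpenPosMeasure :=
  (gaussianReal_absolutelyContinuous' μ hv).isOpenPosMeasure

lemma cdf_gaussianReal_eq_integral (hv : v ≠ 0) (x : ℝ) :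
    cdf (gaussianReal μ v) x = ∫ t in Iic x, gaussianPDFReal μ v t := by
  rw [cdf_eq_real, measureReal_def, gaussianReal_apply_eq_integral μ hv,
    ENNReal.toReal_ofReal (integral_nonneg (gaussianPDFReal_nonneg μ v))]

lemma strictMono_mul_sub_cdf_gaussianReal (hv : v ≠ 0) :
    StrictMono fun x ↦ (√(2 * Real.pi * v))⁻¹ * x - cdf (gaussianReal μ v) x := by
  intro x y hxy
  have hlt : ∃ t ∈ Icc x y, gaussianPDFReal μ v t < (√(2 * Real.pi * v))⁻¹ := by
    obtain ⟨t, ht, htμ⟩ := (Icc_infinite hxy).nontrivial.exists_ne μ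
    exact ⟨t, ht, gaussianPDFReal_lt_of_ne μ hv htμ⟩
  have hcdf : cdf (gaussianReal μ v) y - cdf (gaussianReal μ v) x
      < (√(2 * Real.pi * v))⁻¹ * (y - x) := calc
    _ = ∫ t in x..y, gaussianPDFReal μ v t := by
      rw [cdf_gaussianReal_eq_integral μ hv, cdf_gaussianReal_eq_integral μ hv]
      exact intervalIntegral.integral_Iic_sub_Iic
        (integrable_gaussianPDFReal μ v).integrableOn (integrable_gaussianPDFReal μ v).integrableOn
    _ < ∫ _ in x..y, (√(2 * Real.pi * v))⁻¹ :=
      intervalIntegral.integral_lt_integral_of_continuousOn_of_le_of_exists_lt hxy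
        (continuous_gaussianPDFReal μ v).continuousOn continuousOn_const
        (fun t _ ↦ gaussianPDFReal_le μ v t) hlt
    _ = (√(2 * Real.pi * v))⁻¹ * (y - x) := by
      rw [intervalIntegral.integral_const, smul_eq_mul, mul_comm]
  linear_combination hcdf

lemma stdNormalCDF_eq_cdf_gaussianReal : stdNormalCDF = cdf (gaussianReal 0 1) := by
  ext x
  simp [cdf_gaussianReal_eq_integral, stdNormalCDF, gaussianPDFReal]

end Gaussian

theorem stmt_0_general (k : ℝ) (hk : k ≤ √(2 * Real.pi)) (b : ℝ) :
    ∃ θ ∈ Ioo (0 : ℝ) 1, stdNormalCDF (k * θ + b) = θ ∧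
      ∀ θ' : ℝ, stdNormalCDF (k * θ' + b) = θ' → θ' = θ := by
  rw [stdNormalCDF_eq_cdf_gaussianReal]
  set ν := gaussianReal 0 1
  have := isOpenPosMeasure_gaussianReal 0 one_ne_zero
  have := nullSingletonClass_gaussianReal (μ := 0) one_ne_zero
  have hslope : (√(2 * Real.pi * (1 : ℝ≥0)))⁻¹ * k ≤ 1 := by
    rw [NNReal.coe_one, mul_one]
    exact inv_mul_le_one_of_le₀ hk (Real.sqrt_nonneg _)
  have hcont : Continuous fun θ ↦ cdf ν (k * θ + b) := (continuous_cdf ν).comp (by fun_prop)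
  have hunique : (fixedPoints fun θ ↦ cdf ν (k * θ + b)).Subsingleton :=
    subsingleton_fixedPoints_of_injective_sub <| StrictMono.injective <|
      strictMono_sub_comp_affine (monotone_cdf ν)
        (strictMono_mul_sub_cdf_gaussianReal 0 one_ne_zero) hslope b
  obtain ⟨θ, hθ, hfix⟩ := exists_mem_Ioo_isFixedPt_of_mapsTo hcont.continuousOn zero_le_one
    fun θ _ ↦ cdf_mem_Ioo ν (k * θ + b)
  exact ⟨θ, hθ, hfix, fun θ' hfix' ↦ hunique hfix' hfix⟩

theorem stmt_0 (k : ℝ) (hk0 : 0 ≤ k) (hk1 : k ≤ Real.sqrt (2 * Real.pi)) (b : ℝ) :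
    ∃ θ ∈ Set.Ioo (0 : ℝ) 1, stdNormalCDF (k * θ + b) = θ ∧
      ∀ θ' : ℝ, stdNormalCDF (k * θ' + b) = θ' → θ' = θ :=
  stmt_0_general k hk1 b
end

section
/- Let α_x ≥ 0, α_p > 0, σ_μ ≥ 0 with α_x + α_p²·σ_μ² > 0, set α = α_x + α_p and α_ψ = α²/(α_x + α_p²·σ_μ²). If √(α_x/α_p² + σ_μ²) < 1/√(2π), then there exist x_c ∈ ℝ and m ∈ ℝ such that the equation Φ(√α_ψ·(−x_c/√α + (α_p/α)·θ − (α_p/α)·m)) = θ has at least three distinct solutions θ in (0,1). -/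
/-!
The map `θ ↦ Φ (k * (θ - 1 / 2))` commutes with the reflection `θ ↦ 1 - θ`, so it fixes `1 / 2`,
and its other fixed points come in reflected pairs. Its slope at `1 / 2` is `k / √(2π)`. When this
exceeds `1` the map rises above the diagonal just to the right of `1 / 2`, but at `θ = 1` it is
below the diagonal because `Φ < 1`; it therefore crosses the diagonal in between. For `xc = 0` and
`m = 1 / 2` the equilibrium equation has this form, with `k = 1 / √(αx / αp ^ 2 + σμ ^ 2)`.
-/

open MeasureTheory ProbabilityTheory Set Filter Topology Function

section FixedPoints

variable {f : ℝ → ℝ} {f' b c : ℝ}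

theorem eventually_nhdsGT_lt_of_hasDerivWithinAt_of_isFixedPt
    (hderiv : HasDerivWithinAt f f' (Ioi c) c) (hf' : 1 < f') (hc : IsFixedPt f c) :
    ∀ᶠ y in 𝓝[>] c, y < f y := by
  have hslope : ∀ᶠ y in 𝓝[>] c, 1 < slope f c y :=
    ((hasDerivWithinAt_iff_tendsto_slope' self_notMem_Ioi).1 hderiv).eventually_const_lt hf'
  filter_upwards [hslope, self_mem_nhdsWithin] with y hy hcy
  rw [slope_def_field, hc.eq, one_lt_div (sub_pos.2 hcy)] at hy
  linarith

theorem exists_mem_Ioo_isFixedPt_of_hasDerivWithinAt (hcb : c < b)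
    (hcont : ContinuousOn f (Icc c b)) (hderiv : HasDerivWithinAt f f' (Ioi c) c)
    (hf' : 1 < f') (hc : IsFixedPt f c) (hb : f b < b) : ∃ θ ∈ Ioo c b, IsFixedPt f θ := by
  obtain ⟨y, hy, hcy, hyb⟩ :=
    ((eventually_nhdsGT_lt_of_hasDerivWithinAt_of_isFixedPt hderiv hf' hc).and
      (Ioo_mem_nhdsGT hcb)).exists
  obtain ⟨θ, ⟨hyθ, hθb⟩, hθ⟩ :=
    exists_mem_Icc_isFixedPt (hcont.mono (Icc_subset_Icc_left hcy.le)) hyb.le hy.le hb.le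
  have hθ_ne : θ ≠ b := by
    rintro rfl
    exact hb.ne hθ
  exact ⟨θ, ⟨hcy.trans_le hyθ, hθb.lt_of_ne hθ_ne⟩, hθ⟩

end FixedPoints

section IntegralIic

variable {E : Type*} [NormedAddCommGroup E] [NormedSpace ℝ E] {f : ℝ → E}

theorem hasDerivAt_setIntegral_Iic [CompleteSpace E] (hf : Integrable f) {x : ℝ}
    (hx : ContinuousAt f x) : HasDerivAt (fun y ↦ ∫ t in Iic y, f t) (f x) x := by
  have hsplit : (fun y ↦ ∫ t in Iic y, f t) =
      fun y ↦ (∫ t in Iic 0, f t) + ∫ t in 0..y, f t := by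
    funext y
    rw [← intervalIntegral.integral_Iic_sub_Iic hf.integrableOn hf.integrableOn,
      add_sub_cancel]
  rw [hsplit]
  exact (intervalIntegral.integral_hasDerivAt_right hf.intervalIntegrable
    hf.aestronglyMeasurable.stronglyMeasurableAtFilter hx).const_add _

theorem setIntegral_Iic_add_setIntegral_Iic_neg (hf : Integrable f) (heven : f.Even) (x : ℝ) :
    (∫ t in Iic x, f t) + ∫ t in Iic (-x), f t = ∫ t, f t := by
  have hreflect : ∫ t in Iic (-x), f t = ∫ t in Ioi x, f t := by
    simpa only [heven _, neg_neg] using integral_comp_neg_Iic (-x) f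
  rw [hreflect, intervalIntegral.integral_Iic_add_Ioi hf.integrableOn hf.integrableOn]

end IntegralIic

theorem gaussianPDFReal_zero_one (t : ℝ) :
    gaussianPDFReal 0 1 t = (√(2 * Real.pi))⁻¹ * Real.exp (-t ^ 2 / 2) := by
  simp [gaussianPDFReal]

theorem stdNormalCDF_eq_setIntegral_gaussianPDFReal :
    stdNormalCDF = fun x ↦ ∫ t in Iic x, gaussianPDFReal 0 1 t := by
  funext x
  simp only [stdNormalCDF, gaussianPDFReal_zero_one]

theorem stdNormalCDF_pos (x : ℝ) : 0 < stdNormalCDF x := by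
  have hsupport : support (gaussianPDFReal 0 1) = univ :=
    eq_univ_of_forall fun t ↦ (gaussianPDFReal_pos 0 1 t one_ne_zero).ne'
  rw [stdNormalCDF_eq_setIntegral_gaussianPDFReal,
    setIntegral_pos_iff_support_of_nonneg_ae (.of_forall (gaussianPDFReal_nonneg 0 1))
      (integrable_gaussianPDFReal 0 1).integrableOn, hsupport, univ_inter, Real.volume_Iic]
  exact ENNReal.zero_lt_top

theorem stdNormalCDF_neg (x : ℝ) : stdNormalCDF (-x) = 1 - stdNormalCDF x := by
  have heven : (gaussianPDFReal 0 1).Even := fun t ↦ by simp only [gaussianPDFReal_zero_one, neg_sq]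
  rw [eq_sub_iff_add_eq', stdNormalCDF_eq_setIntegral_gaussianPDFReal,
    ← integral_gaussianPDFReal_eq_one 0 one_ne_zero]
  exact setIntegral_Iic_add_setIntegral_Iic_neg (integrable_gaussianPDFReal 0 1) heven x

theorem stdNormalCDF_zero : stdNormalCDF 0 = 1 / 2 := by
  have h := stdNormalCDF_neg 0
  rw [neg_zero] at h
  linarith

theorem stdNormalCDF_lt_one (x : ℝ) : stdNormalCDF x < 1 := by
  linarith [stdNormalCDF_pos (-x), stdNormalCDF_neg x]

theorem hasDerivAt_stdNormalCDF (x : ℝ) : HasDerivAt stdNormalCDF (gaussianPDFReal 0 1 x) x := by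
  rw [stdNormalCDF_eq_setIntegral_gaussianPDFReal]
  have hcont : Continuous (gaussianPDFReal 0 1) := by
    unfold gaussianPDFReal
    fun_prop
  exact hasDerivAt_setIntegral_Iic (integrable_gaussianPDFReal 0 1) hcont.continuousAt

section CenteredNormalResponse

variable (k : ℝ)

/-- The `Φ`-side of the equilibrium equation of the global game in the symmetric case `xc = 0`,
`m = 1 / 2`, as a function of the threshold `θ`; its fixed points are the equilibrium thresholds.
The precision parameters enter only through `k = √αψ * (αp / α)`. -/
noncomputable def centeredNormalResponse (θ : ℝ) : ℝ :=
  stdNormalCDF (k * (θ - 1 / 2))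

theorem centeredNormalResponse_lt_one (θ : ℝ) : centeredNormalResponse k θ < 1 :=
  stdNormalCDF_lt_one _

theorem semiconj_one_sub_centeredNormalResponse :
    Semiconj (1 - ·) (centeredNormalResponse k) (centeredNormalResponse k) := by
  intro θ
  have hneg : k * (1 - θ - 1 / 2) = -(k * (θ - 1 / 2)) := by ring
  simp only [centeredNormalResponse, hneg, stdNormalCDF_neg]

theorem isFixedPt_centeredNormalResponse_half : IsFixedPt (centeredNormalResponse k) (1 / 2) := by
  rw [IsFixedPt, centeredNormalResponse, sub_self, mul_zero, stdNormalCDF_zero]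

theorem hasDerivAt_centeredNormalResponse (θ : ℝ) :
    HasDerivAt (centeredNormalResponse k) (gaussianPDFReal 0 1 (k * (θ - 1 / 2)) * k) θ := by
  have hinner : HasDerivAt (fun t ↦ k * (t - 1 / 2)) k θ := by
    simpa only [mul_one] using ((hasDerivAt_id' θ).sub_const (1 / 2)).const_mul k
  exact (hasDerivAt_stdNormalCDF _).comp θ hinner

variable {k}

theorem exists_mem_Ioo_isFixedPt_centeredNormalResponse (hk : √(2 * Real.pi) < k) :
    ∃ θ ∈ Ioo (1 / 2) 1, IsFixedPt (centeredNormalResponse k) θ := by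
  have hderiv := hasDerivAt_centeredNormalResponse k
  have hslope : 1 < gaussianPDFReal 0 1 (k * (1 / 2 - 1 / 2)) * k := by
    have hpi : 0 < √(2 * Real.pi) := by positivity
    rwa [sub_self, mul_zero, gaussianPDFReal_zero_one, zero_pow two_ne_zero, neg_zero, zero_div,
      Real.exp_zero, mul_one, inv_mul_eq_div, one_lt_div hpi]
  exact exists_mem_Ioo_isFixedPt_of_hasDerivWithinAt one_half_lt_one
    (HasDerivAt.continuousOn fun θ _ ↦ hderiv θ) (hderiv _).hasDerivWithinAt hslope
    (isFixedPt_centeredNormalResponse_half k) (centeredNormalResponse_lt_one k 1)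

end CenteredNormalResponse

theorem sqrt_sq_div_mul_div_eq_inv_sqrt {a p : ℝ} (ha : 0 < a) (hp : 0 < p) (x s : ℝ) :
    √(a ^ 2 / (x + p ^ 2 * s ^ 2)) * (p / a) = (√(x / p ^ 2 + s ^ 2))⁻¹ := by
  have hcommon : x / p ^ 2 + s ^ 2 = (x + p ^ 2 * s ^ 2) / p ^ 2 := by field_simp
  rw [hcommon, Real.sqrt_div (sq_nonneg a), Real.sqrt_div' _ (sq_nonneg p), Real.sqrt_sq ha.le,
    Real.sqrt_sq hp.le, inv_div, div_mul_div_comm, mul_comm, mul_div_mul_right _ _ ha.ne']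

theorem lt_sqrt_sq_div_mul_div {a p x s r : ℝ} (ha : 0 < a) (hp : 0 < p)
    (hpos : 0 < x + p ^ 2 * s ^ 2) (h : √(x / p ^ 2 + s ^ 2) < 1 / r) :
    r < √(a ^ 2 / (x + p ^ 2 * s ^ 2)) * (p / a) := by
  have hdisp : 0 < x / p ^ 2 + s ^ 2 := by
    field_simp
    rwa [zero_mul]
  rw [one_div] at h
  rw [sqrt_sq_div_mul_div_eq_inv_sqrt ha hp]
  exact lt_inv_of_lt_inv₀ (Real.sqrt_pos.2 hdisp) h

theorem stmt_3 (αx αp σμ : ℝ) (hαx : 0 ≤ αx) (hαp : 0 < αp) (hσμ : 0 ≤ σμ)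
    (hpos : 0 < αx + αp ^ 2 * σμ ^ 2)
    (α αψ : ℝ) (hα : α = αx + αp) (hαψ : αψ = α ^ 2 / (αx + αp ^ 2 * σμ ^ 2))
    (h : Real.sqrt (αx / αp ^ 2 + σμ ^ 2) < 1 / Real.sqrt (2 * Real.pi)) :
    ∃ xc m : ℝ, ∃ θ₁ θ₂ θ₃ : ℝ,
      θ₁ ∈ Set.Ioo (0 : ℝ) 1 ∧ θ₂ ∈ Set.Ioo (0 : ℝ) 1 ∧ θ₃ ∈ Set.Ioo (0 : ℝ) 1 ∧
      θ₁ ≠ θ₂ ∧ θ₁ ≠ θ₃ ∧ θ₂ ≠ θ₃ ∧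
      stdNormalCDF (Real.sqrt αψ *
        (-xc / Real.sqrt α + (αp / α) * θ₁ - (αp / α) * m)) = θ₁ ∧
      stdNormalCDF (Real.sqrt αψ *
        (-xc / Real.sqrt α + (αp / α) * θ₂ - (αp / α) * m)) = θ₂ ∧
      stdNormalCDF (Real.sqrt αψ *
        (-xc / Real.sqrt α + (αp / α) * θ₃ - (αp / α) * m)) = θ₃ := by
  have hα_pos : 0 < α := by linarith
  have hslope : √(2 * Real.pi) < √αψ * (αp / α) := by
    rw [hαψ]
    exact lt_sqrt_sq_div_mul_div hα_pos hαp hpos h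
  obtain ⟨θ, ⟨hθ_half, hθ_one⟩, hθ⟩ := exists_mem_Ioo_isFixedPt_centeredNormalResponse hslope
  have hresponse (t : ℝ) : stdNormalCDF (√αψ * (-0 / √α + αp / α * t - αp / α * (1 / 2))) =
      centeredNormalResponse (√αψ * (αp / α)) t := by
    rw [centeredNormalResponse]
    ring_nf
  refine ⟨0, 1 / 2, 1 - θ, 1 / 2, θ, ⟨by linarith, by linarith⟩, by norm_num,
    ⟨by linarith, hθ_one⟩, by linarith, by linarith, hθ_half.ne, ?_, ?_, ?_⟩ <;> rw [hresponse]
  · exact hθ.map (semiconj_one_sub_centeredNormalResponse _)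
  · exact isFixedPt_centeredNormalResponse_half _
  · exact hθ
end

section
/- Fix α_x > 0, α_p > 0. (i) For every σ_μ ≥ 0 there exists ε₀ > 0 such that for all σ_ε with 0 < σ_ε < ε₀, setting α_z = α_x²/(σ_ε²·(α_x + α_p²·σ_μ²)), we have 1/√(2π) ≤ ((α_x + α_z)/α_x)·√(α_x/α_p² + σ_μ²). (ii) For every σ_ε > 0 there exists M > 0 such that for all σ_μ > M, setting α_z = α_x²/(σ_ε²·(α_x + α_p²·σ_μ²)), we have 1/√(2π) ≤ ((α_x + α_z)/α_x)·√(α_x/α_p² + σ_μ²). -/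
/-!
The uniqueness condition compares `1 / √(2π)` with the product of `(αx + αz) / αx = 1 + αz / αx` and
`√(αx / αp² + σμ²)`. As `σε → 0` the induced precision `αz` diverges while the square root stays
fixed and positive, so the product exceeds every threshold. For dispersed priors `αz` tends to `0`,
but the first factor is still at least `1` and the square root at least `σμ`; hence `σμ` itself
bounds the product from below, whatever the public signal.
-/

open Filter Topology

/-- The public precision `αz` induced by the endogenous signal `S = Φ⁻¹(A) + σε ε` about the
aggregate action `A`. The junk value at `σε = 0` is `0`, although the signal is then perfectly
precise. -/
noncomputable def publicPrecision (αx αp σμ σε : ℝ) : ℝ :=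
  αx ^ 2 / (σε ^ 2 * (αx + αp ^ 2 * σμ ^ 2))

/-- The quantity that has to be at least `1 / √(2π)` in the condition for uniqueness of threshold
equilibria, as a function of an arbitrary public precision `αz`. -/
noncomputable def uniquenessIndex (αx αp σμ αz : ℝ) : ℝ :=
  (αx + αz) / αx * √(αx / αp ^ 2 + σμ ^ 2)

section

variable {αx αp σμ σε αz : ℝ}

lemma publicPrecision_nonneg (hαx : 0 ≤ αx) : 0 ≤ publicPrecision αx αp σμ σε := by
  unfold publicPrecision
  positivity

lemma le_uniquenessIndex (hαx : 0 < αx) (hαz : 0 ≤ αz) : σμ ≤ uniquenessIndex αx αp σμ αz := by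
  have one_le_factor : 1 ≤ (αx + αz) / αx :=
    (one_le_div hαx).2 (le_add_of_nonneg_right hαz)
  calc
    σμ ≤ √(αx / αp ^ 2 + σμ ^ 2) := Real.le_sqrt_of_sq_le (le_add_of_nonneg_left (by positivity))
    _ ≤ uniquenessIndex αx αp σμ αz := le_mul_of_one_le_left (Real.sqrt_nonneg _) one_le_factor

lemma tendsto_publicPrecision_nhdsNE_zero (hαx : 0 < αx) :
    Tendsto (publicPrecision αx αp σμ) (𝓝[≠] 0) atTop := by
  have sq_tendsto : Tendsto (fun σ : ℝ ↦ σ ^ 2) (𝓝[≠] 0) (𝓝[>] 0) := by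
    refine tendsto_nhdsWithin_iff.2 ⟨?_, ?_⟩
    · exact ((continuous_pow 2).tendsto' 0 0 (zero_pow two_ne_zero)).mono_left nhdsWithin_le_nhds
    · filter_upwards [self_mem_nhdsWithin] with σ hσ using sq_pos_of_ne_zero hσ
  have coeff_pos : 0 < αx ^ 2 / (αx + αp ^ 2 * σμ ^ 2) := by positivity
  refine ((tendsto_inv_nhdsGT_zero.comp sq_tendsto).const_mul_atTop coeff_pos).congr fun σ ↦ ?_
  rw [publicPrecision, Function.comp_apply, ← div_eq_mul_inv, div_div, mul_comm (σ ^ 2)]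

lemma tendsto_uniquenessIndex_atTop (hαx : 0 < αx) (hαp : αp ≠ 0) :
    Tendsto (uniquenessIndex αx αp σμ) atTop atTop := by
  have sqrt_pos : 0 < √(αx / αp ^ 2 + σμ ^ 2) := by positivity
  have factor_tendsto : Tendsto (fun αz ↦ (αx + αz) / αx) atTop atTop :=
    (tendsto_atTop_add_const_left _ αx tendsto_id).atTop_div_const hαx
  exact factor_tendsto.atTop_mul_const sqrt_pos

end

theorem stmt_12 (αx αp : ℝ) (hαx : 0 < αx) (hαp : 0 < αp) :
    (∀ σμ : ℝ, 0 ≤ σμ →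
      ∃ ε₀ > (0 : ℝ), ∀ σε : ℝ, 0 < σε → σε < ε₀ →
        1 / Real.sqrt (2 * Real.pi) ≤
          ((αx + αx ^ 2 / (σε ^ 2 * (αx + αp ^ 2 * σμ ^ 2))) / αx) *
            Real.sqrt (αx / αp ^ 2 + σμ ^ 2)) ∧
    (∀ σε : ℝ, 0 < σε →
      ∃ M > (0 : ℝ), ∀ σμ : ℝ, σμ > M →
        1 / Real.sqrt (2 * Real.pi) ≤
          ((αx + αx ^ 2 / (σε ^ 2 * (αx + αp ^ 2 * σμ ^ 2))) / αx) *
            Real.sqrt (αx / αp ^ 2 + σμ ^ 2)) := by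
  refine ⟨fun σμ _ ↦ ?_, fun σε _ ↦ ?_⟩
  · have index_tendsto :
        Tendsto (fun σε ↦ uniquenessIndex αx αp σμ (publicPrecision αx αp σμ σε)) (𝓝[>] 0) atTop :=
      (tendsto_uniquenessIndex_atTop hαx hαp.ne').comp
        ((tendsto_publicPrecision_nhdsNE_zero hαx).mono_left (nhdsGT_le_nhdsNE 0))
    obtain ⟨ε₀, ε₀_pos, unique_below⟩ := mem_nhdsGT_iff_exists_Ioo_subset.1
      (index_tendsto.eventually_ge_atTop (1 / √(2 * Real.pi)))
    exact ⟨ε₀, ε₀_pos, fun σε σε_pos σε_lt ↦ unique_below ⟨σε_pos, σε_lt⟩⟩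
  · exact ⟨1 / √(2 * Real.pi), by positivity, fun σμ M_lt ↦
      M_lt.le.trans (le_uniquenessIndex hαx (publicPrecision_nonneg hαx.le))⟩
end

section
/- Let α_x > 0, α_p > 0, α_z ≥ 0, σ_μ ≥ 0 and set B = √(α_x + α_p²·σ_μ²). If 1/√(2π) < √(α_x/(α_p + α_z)² + σ_μ²/(1 + α_z/α_p)²), then for every y ∈ ℝ: (i) −(α_p + α_z)·φ(y) + B > 0; (ii) φ(y)·α_p·α_x/B − (α_x + α_z) < 0; and hence (iii) the quotient (−(α_p + α_z)·φ(y) + B)/(φ(y)·α_p·α_x/B − (α_x + α_z)) is strictly negative. -/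
/-- The standard normal density `φ(x) = (2π)^{-1/2} exp(-x²/2)`. -/
noncomputable def stdNormalPDF (x : ℝ) : ℝ :=
  (Real.sqrt (2 * Real.pi))⁻¹ * Real.exp (-x ^ 2 / 2)

/-!
The right-hand side of the hypothesis equals `B / |αp + αz|`, so the hypothesis says that the peak
`1 / √(2π)` of the normal density lies below this quotient. Hence `c * φ(y) < B` whenever
`c ≤ |αp + αz|`: taking `c = αp + αz` makes the numerator positive, and taking `c = αp` bounds
the first term of the denominator by `αx`.
-/

open ProbabilityTheory Real
open scoped NNReal

theorem gaussianPDFReal_le_inv_sqrt (μ : ℝ) (v : ℝ≥0) (x : ℝ) :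
    gaussianPDFReal μ v x ≤ (√(2 * π * v))⁻¹ := by
  have exponent_nonpos : -(x - μ) ^ 2 / (2 * v) ≤ 0 :=
    div_nonpos_of_nonpos_of_nonneg (neg_nonpos.mpr (sq_nonneg _)) (by positivity)
  exact mul_le_of_le_one_right (by positivity) (exp_le_one_iff.mpr exponent_nonpos)

theorem stdNormalPDF_eq_gaussianPDFReal : stdNormalPDF = gaussianPDFReal 0 1 := by
  ext x
  simp [stdNormalPDF, gaussianPDFReal]

theorem stdNormalPDF_pos (y : ℝ) : 0 < stdNormalPDF y :=
  stdNormalPDF_eq_gaussianPDFReal ▸ gaussianPDFReal_pos 0 1 y one_ne_zero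

theorem stdNormalPDF_le_inv_sqrt_two_pi (y : ℝ) : stdNormalPDF y ≤ (√(2 * π))⁻¹ := by
  simpa [stdNormalPDF_eq_gaussianPDFReal] using gaussianPDFReal_le_inv_sqrt 0 1 y

section

variable {αx αp αz σμ : ℝ}

theorem sqrt_div_sq_add_div_sq_eq (hαp : αp ≠ 0) :
    √(αx / (αp + αz) ^ 2 + σμ ^ 2 / (1 + αz / αp) ^ 2) =
      √(αx + αp ^ 2 * σμ ^ 2) / |αp + αz| := by
  have ratio_eq : 1 + αz / αp = (αp + αz) / αp := by field_simp
  rw [ratio_eq, div_pow, div_div_eq_mul_div, ← add_div, sqrt_div' _ (sq_nonneg _), sqrt_sq_eq_abs,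
    mul_comm (σμ ^ 2)]

theorem mul_stdNormalPDF_lt_sqrt (hαp : αp ≠ 0)
    (h : 1 / √(2 * π) < √(αx / (αp + αz) ^ 2 + σμ ^ 2 / (1 + αz / αp) ^ 2))
    {c : ℝ} (hc : c ≤ |αp + αz|) (y : ℝ) :
    c * stdNormalPDF y < √(αx + αp ^ 2 * σμ ^ 2) := by
  rw [one_div, sqrt_div_sq_add_div_sq_eq hαp] at h
  have pdf_lt : stdNormalPDF y < √(αx + αp ^ 2 * σμ ^ 2) / |αp + αz| :=
    (stdNormalPDF_le_inv_sqrt_two_pi y).trans_lt h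
  have abs_add_pos : 0 < |αp + αz| := by
    refine (abs_nonneg _).lt_of_ne' fun h0 ↦ ?_
    rw [h0, div_zero] at pdf_lt
    exact pdf_lt.not_gt (stdNormalPDF_pos y)
  calc
    c * stdNormalPDF y ≤ |αp + αz| * stdNormalPDF y := by gcongr; exact (stdNormalPDF_pos y).le
    _ < √(αx + αp ^ 2 * σμ ^ 2) := (lt_div_iff₀' abs_add_pos).mp pdf_lt

end

theorem stmt_13 (αx αp αz σμ : ℝ) (hαx : 0 < αx) (hαp : 0 < αp) (hαz : 0 ≤ αz)
    (hσμ : 0 ≤ σμ) (B : ℝ) (hB : B = Real.sqrt (αx + αp ^ 2 * σμ ^ 2))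
    (h : 1 / Real.sqrt (2 * Real.pi) <
      Real.sqrt (αx / (αp + αz) ^ 2 + σμ ^ 2 / (1 + αz / αp) ^ 2)) :
    ∀ y : ℝ,
      0 < -(αp + αz) * stdNormalPDF y + B ∧
      stdNormalPDF y * αp * αx / B - (αx + αz) < 0 ∧
      (-(αp + αz) * stdNormalPDF y + B) /
        (stdNormalPDF y * αp * αx / B - (αx + αz)) < 0 := by
  intro y
  have B_pos : 0 < B := by rw [hB]; positivity
  have mul_pdf_lt {c : ℝ} (hc : c ≤ |αp + αz|) : c * stdNormalPDF y < B :=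
    hB ▸ mul_stdNormalPDF_lt_sqrt hαp.ne' h hc y
  have numerator_pos : 0 < -(αp + αz) * stdNormalPDF y + B := by
    linarith [mul_pdf_lt (le_abs_self (αp + αz))]
  have αp_le : αp ≤ |αp + αz| := (le_add_of_nonneg_right hαz).trans (le_abs_self _)
  have denominator_neg : stdNormalPDF y * αp * αx / B - (αx + αz) < 0 := by
    refine sub_neg.mpr ?_
    calc
      stdNormalPDF y * αp * αx / B = αp * stdNormalPDF y / B * αx := by ring
      _ < αx := mul_lt_of_lt_one_left hαx ((div_lt_one B_pos).mpr (mul_pdf_lt αp_le))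
      _ ≤ αx + αz := le_add_of_nonneg_right hαz
  exact ⟨numerator_pos, denominator_neg, div_neg_of_pos_of_neg numerator_pos denominator_neg⟩
end

section
/- Fix α_x > 0, α_p > 0, σ_ε > 0, and for σ_μ ≥ 0 set α_z(σ_μ) = α_x²/(σ_ε²·(α_x + α_p²·σ_μ²)). There exists M > 0 such that for all σ_μ > M, both 1/√(2π) < ((α_x + α_z(σ_μ))/α_x)·√(α_x/α_p² + σ_μ²) and 1/√(2π) < √(α_x/(α_p + α_z(σ_μ))² + σ_μ²/(1 + α_z(σ_μ)/α_p)²) hold. -/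
/-!
As `σμ → ∞` the induced public precision `αz` is of order `σμ⁻²`, so it tends to `0`. The
right-hand sides of both uniqueness conditions are then asymptotic to `σμ`, hence they eventually
exceed any constant, in particular `1 / √(2π)`.
-/

open Filter Topology

/-- The precision `αz` of the public signal `S = Φ⁻¹(A) + σε·ε` about aggregate actions, for private
signal precision `αx`, prior precision `αp`, noise scale `σε` and prior-mean dispersion `σμ`. -/
noncomputable def inducedPublicPrecision (αx αp σε σμ : ℝ) : ℝ :=
  αx ^ 2 / (σε ^ 2 * (αx + αp ^ 2 * σμ ^ 2))

/-- The quantity which has to exceed `1 / √(2π)` for the equilibrium threshold to be unique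
(Proposition 4), with the public precision `αz` as a free parameter. -/
noncomputable def thresholdCriterion (αx αp αz σμ : ℝ) : ℝ :=
  ((αx + αz) / αx) * √(αx / αp ^ 2 + σμ ^ 2)

/-- The quantity which has to exceed `1 / √(2π)` for the equilibrium strategy to be unique
(Proposition 5, in squared form), with the public precision `αz` as a free parameter. -/
noncomputable def strategyCriterion (αx αp αz σμ : ℝ) : ℝ :=
  √(αx / (αp + αz) ^ 2 + σμ ^ 2 / (1 + αz / αp) ^ 2)

theorem tendsto_inducedPublicPrecision_atTop (αx σε : ℝ) {αp : ℝ} (hαp : αp ≠ 0) :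
    Tendsto (inducedPublicPrecision αx αp σε) atTop (𝓝 0) := by
  have hvar : Tendsto (fun σμ : ℝ ↦ αx + αp ^ 2 * σμ ^ 2) atTop atTop :=
    tendsto_atTop_add_const_left _ _ <|
      (tendsto_pow_atTop two_ne_zero).const_mul_atTop (sq_pos_of_ne_zero hαp)
  refine (tendsto_const_nhds (x := αx ^ 2 / σε ^ 2).div_atTop hvar).congr fun σμ ↦ ?_
  rw [inducedPublicPrecision, div_mul_eq_div_div]

section Criteria

variable {ι : Type*} {l : Filter ι} {αz σμ : ι → ℝ}

theorem tendsto_thresholdCriterion_atTop {αx : ℝ} (αp : ℝ) (hαx : αx ≠ 0)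
    (hαz : Tendsto αz l (𝓝 0)) (hσμ : Tendsto σμ l atTop) :
    Tendsto (fun i ↦ thresholdCriterion αx αp (αz i) (σμ i)) l atTop := by
  have hfactor : Tendsto (fun i ↦ (αx + αz i) / αx) l (𝓝 1) := by
    simpa only [add_zero, div_self hαx] using (hαz.const_add αx).div_const αx
  have hroot : Tendsto (fun i ↦ √(αx / αp ^ 2 + σμ i ^ 2)) l atTop :=
    Real.tendsto_sqrt_atTop.comp <|
      tendsto_atTop_add_const_left _ _ ((tendsto_pow_atTop two_ne_zero).comp hσμ)
  exact hfactor.pos_mul_atTop one_pos hroot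

theorem tendsto_strategyCriterion_atTop (αx : ℝ) {αp : ℝ} (hαp : αp ≠ 0)
    (hαz : Tendsto αz l (𝓝 0)) (hσμ : Tendsto σμ l atTop) :
    Tendsto (fun i ↦ strategyCriterion αx αp (αz i) (σμ i)) l atTop := by
  have hsignal : Tendsto (fun i ↦ αx / (αp + αz i) ^ 2) l (𝓝 (αx / (αp + 0) ^ 2)) :=
    tendsto_const_nhds.div ((hαz.const_add αp).pow 2) (by simpa using hαp)
  have hdamping : Tendsto (fun i ↦ ((1 + αz i / αp) ^ 2)⁻¹) l (𝓝 1) := by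
    simpa using (((hαz.div_const αp).const_add 1).pow 2).inv₀ (by simp)
  have hdispersion : Tendsto (fun i ↦ σμ i ^ 2 / (1 + αz i / αp) ^ 2) l atTop :=
    ((tendsto_pow_atTop two_ne_zero).comp hσμ).atTop_mul_pos one_pos hdamping
  exact Real.tendsto_sqrt_atTop.comp (hsignal.add_atTop hdispersion)

end Criteria

theorem stmt_15 (αx αp σε : ℝ) (hαx : 0 < αx) (hαp : 0 < αp) (hσε : 0 < σε) :
    ∃ M > (0 : ℝ), ∀ σμ : ℝ, σμ > M →
      1 / Real.sqrt (2 * Real.pi) <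
        ((αx + αx ^ 2 / (σε ^ 2 * (αx + αp ^ 2 * σμ ^ 2))) / αx) *
          Real.sqrt (αx / αp ^ 2 + σμ ^ 2) ∧
      1 / Real.sqrt (2 * Real.pi) <
        Real.sqrt (αx / (αp + αx ^ 2 / (σε ^ 2 * (αx + αp ^ 2 * σμ ^ 2))) ^ 2 +
          σμ ^ 2 / (1 + (αx ^ 2 / (σε ^ 2 * (αx + αp ^ 2 * σμ ^ 2))) / αp) ^ 2) := by
  have hαz := tendsto_inducedPublicPrecision_atTop αx σε hαp.ne'
  have hthreshold := tendsto_thresholdCriterion_atTop αp hαx.ne' hαz tendsto_id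
  have hstrategy := tendsto_strategyCriterion_atTop αx hαp.ne' hαz tendsto_id
  exact (atTop_basis_Ioi' 0).eventually_iff.mp <|
    (hthreshold.eventually_gt_atTop _).and (hstrategy.eventually_gt_atTop _)
end
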